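/- arXiv:2103.13369 — 12 statements merged into one kernel-verified Lean document; each statement's English description precedes it below -/
import Mathlib

section
/- Under the potential-outcomes IV setup, suppose cov(D,Z) ≠ 0 and b > 0. Let μ2* = μ2 if c > 0 and μ2* = 0 if c = 0. Then max{|μ1|, |μ2*|} ≥ |β| · γ, where γ = |E[D|Z=1] − E[D|Z=0]| / (E[D|Z=1] + E[D|Z=0]). -/
/-!
Write `B` for the complier event `{D1 = 1, D0 = 0}` and `C` for the defier event `{D1 = 0, D0 = 1}`.
On `{Z = 1}` the realized `D`, `Y` are the potential ones under `Z = 1`, and likewise for `Z = 0`;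
by independence of `Z`, conditioning on `Z` can then be dropped (`integral_cond_eq_of_indepFun`).
Hence `k1 + k2 = E[D1 + D0] ≥ b + c`, because `D1 + D0 ≥ 1_B + 1_C`, while the numerator of the IV
coefficient is `E[(Y1 - Y0) (D1 - D0)] = b * mu1 - c * mu2`, because `D1 - D0 = 1_B - 1_C`.
Since `|beta| * gamma` is at most the absolute numerator divided by `k1 + k2`, it is bounded by
`(b * |mu1| + c * |mu2star|) / (b + c) ≤ max |mu1| |mu2star|`.
-/

open MeasureTheory ProbabilityTheory

set_option linter.unusedVariables false

/-- This holds for null `s` too: both sides are then zero. -/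
lemma measure_mul_integral_cond {Ω : Type*} [MeasurableSpace Ω] (μ : Measure Ω)
    [IsFiniteMeasure μ] (s : Set Ω) (f : Ω → ℝ) :
    (μ s).toReal * ∫ ω, f ω ∂(μ[|s]) = ∫ ω in s, f ω ∂μ := by
  by_cases h : μ s = 0
  · simp [h, Measure.restrict_eq_zero.mpr h]
  · rw [ProbabilityTheory.cond, integral_smul_measure, smul_eq_mul, ENNReal.toReal_inv,
      mul_inv_cancel_left₀]
    exact ENNReal.toReal_ne_zero.mpr ⟨h, measure_ne_top _ _⟩

/-- Conditioning on `Z = z` turns `f` into any `X` that agrees with it there, and has no effect on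
the mean of `X` when `X` is independent of `Z`. -/
lemma integral_cond_eq_of_indepFun {Ω : Type*} [MeasurableSpace Ω] (μ : Measure Ω)
    [IsProbabilityMeasure μ] {Z f X : Ω → ℝ} (hZ : Measurable Z) (hX : Measurable X)
    (hind : IndepFun Z X μ) (z : ℝ) (hz : μ {ω | Z ω = z} ≠ 0)
    (hf : ∀ ω, Z ω = z → f ω = X ω) :
    ∫ ω, f ω ∂(μ[|{ω | Z ω = z}]) = ∫ ω, X ω ∂μ := by
  have hs : MeasurableSet {ω | Z ω = z} := hZ (measurableSet_singleton z)
  have hg : Measurable (Set.indicator {z} (fun _ : ℝ => (1 : ℝ))) :=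
    measurable_const.indicator (measurableSet_singleton z)
  have hprod := (hind.comp hg measurable_id).integral_fun_mul_eq_mul_integral
    (hg.comp hZ).aestronglyMeasurable hX.aestronglyMeasurable
  have h1 : ∫ ω in {ω | Z ω = z}, f ω ∂μ
      = ∫ ω, (Set.indicator {z} (fun _ : ℝ => (1 : ℝ)) ∘ Z) ω * (id ∘ X) ω ∂μ := by
    rw [← integral_indicator hs]
    congr 1
    ext ω
    by_cases h : Z ω = z
    · simp [Set.indicator, h, hf ω h]
    · simp [Set.indicator, h]
  have h2 : ∫ ω, (Set.indicator {z} (fun _ : ℝ => (1 : ℝ)) ∘ Z) ω ∂μ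
      = (μ {ω | Z ω = z}).toReal := by
    rw [← Measure.real, ← integral_indicator_one hs]
    rfl
  have h3 := measure_mul_integral_cond μ {ω | Z ω = z} f
  rw [h1, hprod, h2] at h3
  exact mul_left_cancel₀ (ENNReal.toReal_ne_zero.mpr ⟨hz, measure_ne_top _ _⟩) h3

theorem stmt0 {Ω : Type*} [MeasurableSpace Ω] (μ : Measure Ω) [IsProbabilityMeasure μ]
    (Y1 Y0 Z D1 D0 : Ω → ℝ)
    (hY1m : Measurable Y1) (hY0m : Measurable Y0) (hZm : Measurable Z)
    (hD1m : Measurable D1) (hD0m : Measurable D0)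
    (hZ01 : ∀ ω, Z ω = 0 ∨ Z ω = 1)
    (hD101 : ∀ ω, D1 ω = 0 ∨ D1 ω = 1)
    (hD001 : ∀ ω, D0 ω = 0 ∨ D0 ω = 1)
    (hZpos : 0 < μ {ω | Z ω = 1})
    (hZlt : μ {ω | Z ω = 1} < 1)
    (hindep : IndepFun Z (fun ω => (Y1 ω, Y0 ω, D1 ω, D0 ω)) μ)
    (D Y : Ω → ℝ)
    (hDdef : D = fun ω => D1 ω * Z ω + D0 ω * (1 - Z ω))
    (hYdef : Y = fun ω => Y1 ω * D ω + Y0 ω * (1 - D ω))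
    (hY1int : Integrable Y1 μ) (hY0int : Integrable Y0 μ)
    (a b c : ℝ)
    (ha : a = (μ {ω | D1 ω = 1 ∧ D0 ω = 1}).toReal)
    (hb : b = (μ {ω | D1 ω = 1 ∧ D0 ω = 0}).toReal)
    (hc : c = (μ {ω | D1 ω = 0 ∧ D0 ω = 1}).toReal)
    (k1 k2 : ℝ)
    (hk1 : k1 = ∫ ω, D ω ∂(μ[|{ω | Z ω = 1}]))
    (hk2 : k2 = ∫ ω, D ω ∂(μ[|{ω | Z ω = 0}]))
    (mu1 mu2 : ℝ)
    (hmu1 : mu1 = ∫ ω, (Y1 ω - Y0 ω) ∂(μ[|{ω | D1 ω = 1 ∧ D0 ω = 0}]))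
    (hmu2 : mu2 = ∫ ω, (Y1 ω - Y0 ω) ∂(μ[|{ω | D1 ω = 0 ∧ D0 ω = 1}]))
    (beta : ℝ)
    (hbeta : beta = ((∫ ω, Y ω ∂(μ[|{ω | Z ω = 1}])) - ∫ ω, Y ω ∂(μ[|{ω | Z ω = 0}])) / (k1 - k2))
    (hcov : (∫ ω, D ω * Z ω ∂μ) - (∫ ω, D ω ∂μ) * (∫ ω, Z ω ∂μ) ≠ 0)
    (hbpos : 0 < b)
    (mu2star gamma : ℝ)
    (hmu2star : mu2star = if 0 < c then mu2 else 0)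
    (hgamma : gamma = |k1 - k2| / (k1 + k2)) :
    |beta| * gamma ≤ max |mu1| |mu2star| := by
  have hZ1 : μ {ω | Z ω = 1} ≠ 0 := hZpos.ne'
  have hZ0 : μ {ω | Z ω = 0} ≠ 0 := by
    have hcompl : {ω | Z ω = 0} = {ω | Z ω = 1}ᶜ := by
      ext ω
      rcases hZ01 ω with h | h <;> simp [h]
    have hs : MeasurableSet {ω | Z ω = 1} := hZm (measurableSet_singleton 1)
    rw [hcompl, Ne, prob_compl_eq_zero_iff hs]
    exact hZlt.ne
  have hk1' : k1 = ∫ ω, D1 ω ∂μ := by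
    rw [hk1]
    refine integral_cond_eq_of_indepFun μ hZm hD1m ?_ 1 hZ1 fun ω h => by simp [hDdef, h]
    exact hindep.comp (ψ := fun p : ℝ × ℝ × ℝ × ℝ => p.2.2.1) measurable_id (by fun_prop)
  have hk2' : k2 = ∫ ω, D0 ω ∂μ := by
    rw [hk2]
    refine integral_cond_eq_of_indepFun μ hZm hD0m ?_ 0 hZ0 fun ω h => by simp [hDdef, h]
    exact hindep.comp (ψ := fun p : ℝ × ℝ × ℝ × ℝ => p.2.2.2) measurable_id (by fun_prop)
  have hE1 : ∫ ω, Y ω ∂(μ[|{ω | Z ω = 1}]) = ∫ ω, (Y1 ω * D1 ω + Y0 ω * (1 - D1 ω)) ∂μ := by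
    refine integral_cond_eq_of_indepFun μ hZm (by fun_prop) ?_ 1 hZ1
      fun ω h => by simp [hYdef, hDdef, h]
    exact hindep.comp (ψ := fun p : ℝ × ℝ × ℝ × ℝ => p.1 * p.2.2.1 + p.2.1 * (1 - p.2.2.1))
      measurable_id (by fun_prop)
  have hE0 : ∫ ω, Y ω ∂(μ[|{ω | Z ω = 0}]) = ∫ ω, (Y1 ω * D0 ω + Y0 ω * (1 - D0 ω)) ∂μ := by
    refine integral_cond_eq_of_indepFun μ hZm (by fun_prop) ?_ 0 hZ0
      fun ω h => by simp [hYdef, hDdef, h]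
    exact hindep.comp (ψ := fun p : ℝ × ℝ × ℝ × ℝ => p.1 * p.2.2.2 + p.2.1 * (1 - p.2.2.2))
      measurable_id (by fun_prop)
  have hmul : ∀ {V W : Ω → ℝ}, Integrable V μ → Measurable W → (∀ ω, W ω = 0 ∨ W ω = 1) →
      Integrable (fun ω => V ω * W ω) μ := by
    intro V W hV hW hW01
    refine hV.mul_bdd (c := 1) hW.aestronglyMeasurable (ae_of_all _ fun ω => ?_)
    rcases hW01 ω with h | h <;> simp [h]
  have hD1i : Integrable D1 μ := by
    simpa using hmul (integrable_const (1 : ℝ)) hD1m hD101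
  have hD0i : Integrable D0 μ := by
    simpa using hmul (integrable_const (1 : ℝ)) hD0m hD001
  have hflip : ∀ {W : Ω → ℝ}, (∀ ω, W ω = 0 ∨ W ω = 1) →
      ∀ ω, 1 - W ω = 0 ∨ 1 - W ω = 1 := by
    intro W hW ω
    rcases hW ω with h | h <;> simp [h]
  set B : Set Ω := {ω | D1 ω = 1 ∧ D0 ω = 0} with hBdef
  set C : Set Ω := {ω | D1 ω = 0 ∧ D0 ω = 1} with hCdef
  have hB : MeasurableSet B :=
    (hD1m (measurableSet_singleton 1)).inter (hD0m (measurableSet_singleton 0))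
  have hC : MeasurableSet C :=
    (hD1m (measurableSet_singleton 0)).inter (hD0m (measurableSet_singleton 1))
  have hYi : Integrable (fun ω => Y1 ω - Y0 ω) μ := hY1int.sub hY0int
  have hbm : b * mu1 = ∫ ω in B, (Y1 ω - Y0 ω) ∂μ := by
    rw [hb, hmu1, measure_mul_integral_cond]
  have hcm : c * mu2 = ∫ ω in C, (Y1 ω - Y0 ω) ∂μ := by
    rw [hc, hmu2, measure_mul_integral_cond]
  have hN : (∫ ω, Y ω ∂(μ[|{ω | Z ω = 1}])) - ∫ ω, Y ω ∂(μ[|{ω | Z ω = 0}])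
      = b * mu1 - c * mu2 := by
    rw [hE1, hE0, hbm, hcm, ← integral_indicator hB, ← integral_indicator hC,
      ← integral_sub, ← integral_sub (hYi.indicator hB) (hYi.indicator hC)]
    · congr 1
      ext ω
      rcases hD101 ω with h | h <;> rcases hD001 ω with h' | h' <;>
        simp [Set.indicator, hBdef, hCdef, h, h']
    · exact (hmul hY1int hD1m hD101).add (hmul hY0int (by fun_prop) (hflip hD101))
    · exact (hmul hY1int hD0m hD001).add (hmul hY0int (by fun_prop) (hflip hD001))
  have hk : b + c ≤ k1 + k2 := by
    rw [hb, hc, ← Measure.real, ← Measure.real, ← integral_indicator_one hB,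
      ← integral_indicator_one hC, hk1', hk2', ← integral_add hD1i hD0i, ← integral_add]
    · refine integral_mono ?_ (hD1i.add hD0i) fun ω => ?_
      · exact ((integrable_const (1 : ℝ)).indicator hB).add
          ((integrable_const (1 : ℝ)).indicator hC)
      · rcases hD101 ω with h | h <;> rcases hD001 ω with h' | h' <;>
          simp [Set.indicator, hBdef, hCdef, h, h']
    · exact (integrable_const (1 : ℝ)).indicator hB
    · exact (integrable_const (1 : ℝ)).indicator hC
  have hc0 : 0 ≤ c := hc ▸ ENNReal.toReal_nonneg
  have hstar : c * mu2 = c * mu2star := by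
    rw [hmu2star]
    split_ifs with h
    · rfl
    · simp [le_antisymm (not_lt.mp h) hc0]
  have hkpos : 0 < k1 + k2 := by linarith
  have hbg : |beta| * |k1 - k2| ≤ |b * mu1 - c * mu2star| := by
    rw [hbeta, hN, hstar, ← abs_mul]
    -- With division by zero equal to zero, the inequality needs no `k1 ≠ k2`.
    by_cases h : k1 - k2 = 0
    · simp [h]
    · rw [div_mul_cancel₀ _ h]
  have hM1 := le_max_left |mu1| |mu2star|
  have hM2 := le_max_right |mu1| |mu2star|
  set M := max |mu1| |mu2star|
  have hM0 : 0 ≤ M := (abs_nonneg _).trans hM1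
  rw [hgamma, ← mul_div_assoc, div_le_iff₀ hkpos]
  calc |beta| * |k1 - k2| ≤ |b * mu1 - c * mu2star| := hbg
    _ ≤ |b * mu1| + |c * mu2star| := abs_sub _ _
    _ = b * |mu1| + c * |mu2star| := by rw [abs_mul, abs_mul, abs_of_pos hbpos, abs_of_nonneg hc0]
    _ ≤ b * M + c * M := by gcongr
    _ = M * (b + c) := by ring
    _ ≤ M * (k1 + k2) := by gcongr
end

section
/- Under the potential-outcomes IV setup, suppose cov(D,Z) > 0, β ≠ 0, b > 0 and c > 0. If |μ1| ≥ |μ2|, then sign(μ1) = sign(β), i.e. μ1 · β > 0. -/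
/-!
Independence of `Z` turns the conditional means given `Z = 1` and `Z = 0` into unconditional means
of the potential quantities (`integral_cond_of_indepFun`). Since `D1 - D0` is the indicator of the
compliers minus the indicator of the defiers (`integral_mul_sub_eq`), the IV coefficient is
`β = (b μ₁ - c μ₂) / (b - c)`, while `cov(D, Z) = P(Z = 1) P(Z = 0) (b - c)`, so `b > c`.
If `|μ₂| ≤ |μ₁|`, then `μ₁ (b μ₁ - c μ₂) ≥ (b - c) μ₁²`, which is positive unless
`μ₁ = μ₂ = 0`; that case is excluded by `β ≠ 0`.
-/

open MeasureTheory ProbabilityTheory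

set_option linter.unusedVariables false

lemma integral_cond_eq {Ω : Type*} [MeasurableSpace Ω] (μ : Measure Ω) (s : Set Ω) (f : Ω → ℝ) :
    ∫ ω, f ω ∂(μ[|s]) = (μ s).toReal⁻¹ * ∫ ω in s, f ω ∂μ := by
  rw [ProbabilityTheory.cond, integral_smul_measure, ENNReal.toReal_inv, smul_eq_mul]

/-- On the event `Z = z`, the observed `V` agrees with a potential quantity `W` independent of `Z`,
so its conditional mean is the unconditional mean of `W`. -/
lemma integral_cond_of_indepFun {Ω : Type*} [MeasurableSpace Ω] (μ : Measure Ω)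
    [IsProbabilityMeasure μ] {Z V W : Ω → ℝ} (hZ : Measurable Z) (hW : Measurable W)
    (h : IndepFun Z W μ) (z : ℝ) (hz : μ {ω | Z ω = z} ≠ 0) (hV : ∀ ω, Z ω = z → V ω = W ω) :
    ∫ ω, V ω ∂(μ[|{ω | Z ω = z}]) = ∫ ω, W ω ∂μ := by
  have hs : MeasurableSet {ω | Z ω = z} := hZ (measurableSet_singleton z)
  have hg : Measurable (({z} : Set ℝ).indicator (fun _ => (1 : ℝ))) :=
    measurable_const.indicator (measurableSet_singleton z)
  have key := (h.comp hg measurable_id).integral_fun_mul_eq_mul_integral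
    (hg.comp hZ).aestronglyMeasurable (measurable_id.comp hW).aestronglyMeasurable
  have e1 : ∫ ω, (({z} : Set ℝ).indicator (fun _ => (1 : ℝ)) ∘ Z) ω ∂μ
      = (μ {ω | Z ω = z}).toReal := by
    rw [← measureReal_def, ← integral_indicator_one hs]
    rfl
  have e2 : ∫ ω, (({z} : Set ℝ).indicator (fun _ => (1 : ℝ)) ∘ Z) ω * (id ∘ W) ω ∂μ
      = ∫ ω in {ω | Z ω = z}, W ω ∂μ := by
    rw [← integral_indicator hs]
    congr 1
    ext ω
    by_cases hω : Z ω = z <;> simp [Set.indicator, hω]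
  rw [e1, e2] at key
  have e3 : ∫ ω in {ω | Z ω = z}, V ω ∂μ = ∫ ω in {ω | Z ω = z}, W ω ∂μ :=
    setIntegral_congr_fun hs fun ω hω => hV ω hω
  have hpos : (μ {ω | Z ω = z}).toReal ≠ 0 := ENNReal.toReal_ne_zero.2 ⟨hz, measure_ne_top _ _⟩
  rw [integral_cond_eq, e3, key, inv_mul_cancel_left₀ hpos]
  rfl

/-- Always takers and never takers cancel: weighting by `D1 - D0` leaves the compliers minus the
defiers. -/
lemma integral_mul_sub_eq {Ω : Type*} [MeasurableSpace Ω] (μ : Measure Ω)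
    {f D1 D0 : Ω → ℝ} (hf : Integrable f μ) (hD1m : Measurable D1) (hD0m : Measurable D0)
    (hD1 : ∀ ω, D1 ω = 0 ∨ D1 ω = 1) (hD0 : ∀ ω, D0 ω = 0 ∨ D0 ω = 1) :
    ∫ ω, f ω * (D1 ω - D0 ω) ∂μ = (∫ ω in {ω | D1 ω = 1 ∧ D0 ω = 0}, f ω ∂μ)
      - ∫ ω in {ω | D1 ω = 0 ∧ D0 ω = 1}, f ω ∂μ := by
  have hs : MeasurableSet {ω | D1 ω = 1 ∧ D0 ω = 0} :=
    (hD1m (measurableSet_singleton 1)).inter (hD0m (measurableSet_singleton 0))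
  have ht : MeasurableSet {ω | D1 ω = 0 ∧ D0 ω = 1} :=
    (hD1m (measurableSet_singleton 0)).inter (hD0m (measurableSet_singleton 1))
  rw [← integral_indicator hs, ← integral_indicator ht,
    ← integral_sub (hf.indicator hs) (hf.indicator ht)]
  congr 1
  ext ω
  rcases hD1 ω with h1 | h1 <;> rcases hD0 ω with h0 | h0 <;> simp [Set.indicator, h1, h0]

lemma integrable_mul_of_zero_or_one {Ω : Type*} [MeasurableSpace Ω] {μ : Measure Ω}
    {f g : Ω → ℝ} (hf : Integrable f μ) (hgm : Measurable g) (hg : ∀ ω, g ω = 0 ∨ g ω = 1) :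
    Integrable (fun ω => f ω * g ω) μ :=
  hf.mul_bdd (c := 1) hgm.aestronglyMeasurable
    (ae_of_all _ fun ω => by rcases hg ω with h | h <;> simp [h])

theorem stmt2 {Ω : Type*} [MeasurableSpace Ω] (μ : Measure Ω) [IsProbabilityMeasure μ]
    (Y1 Y0 Z D1 D0 : Ω → ℝ)
    (hY1m : Measurable Y1) (hY0m : Measurable Y0) (hZm : Measurable Z)
    (hD1m : Measurable D1) (hD0m : Measurable D0)
    (hZ01 : ∀ ω, Z ω = 0 ∨ Z ω = 1)
    (hD101 : ∀ ω, D1 ω = 0 ∨ D1 ω = 1)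
    (hD001 : ∀ ω, D0 ω = 0 ∨ D0 ω = 1)
    (hZpos : 0 < μ {ω | Z ω = 1})
    (hZlt : μ {ω | Z ω = 1} < 1)
    (hindep : IndepFun Z (fun ω => (Y1 ω, Y0 ω, D1 ω, D0 ω)) μ)
    (D Y : Ω → ℝ)
    (hDdef : D = fun ω => D1 ω * Z ω + D0 ω * (1 - Z ω))
    (hYdef : Y = fun ω => Y1 ω * D ω + Y0 ω * (1 - D ω))
    (hY1int : Integrable Y1 μ) (hY0int : Integrable Y0 μ)
    (a b c : ℝ)
    (ha : a = (μ {ω | D1 ω = 1 ∧ D0 ω = 1}).toReal)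
    (hb : b = (μ {ω | D1 ω = 1 ∧ D0 ω = 0}).toReal)
    (hc : c = (μ {ω | D1 ω = 0 ∧ D0 ω = 1}).toReal)
    (k1 k2 : ℝ)
    (hk1 : k1 = ∫ ω, D ω ∂(μ[|{ω | Z ω = 1}]))
    (hk2 : k2 = ∫ ω, D ω ∂(μ[|{ω | Z ω = 0}]))
    (mu1 mu2 : ℝ)
    (hmu1 : mu1 = ∫ ω, (Y1 ω - Y0 ω) ∂(μ[|{ω | D1 ω = 1 ∧ D0 ω = 0}]))
    (hmu2 : mu2 = ∫ ω, (Y1 ω - Y0 ω) ∂(μ[|{ω | D1 ω = 0 ∧ D0 ω = 1}]))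
    (beta : ℝ)
    (hbeta : beta = ((∫ ω, Y ω ∂(μ[|{ω | Z ω = 1}])) - ∫ ω, Y ω ∂(μ[|{ω | Z ω = 0}])) / (k1 - k2))
    (hcov : 0 < (∫ ω, D ω * Z ω ∂μ) - (∫ ω, D ω ∂μ) * (∫ ω, Z ω ∂μ))
    (hbeta0 : beta ≠ 0) (hbpos : 0 < b) (hcpos : 0 < c)
    (hmu : |mu2| ≤ |mu1|) :
    0 < mu1 * beta := by
  have hZ1 : μ {ω | Z ω = 1} ≠ 0 := hZpos.ne'
  have hZ0 : μ {ω | Z ω = 0} ≠ 0 := by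
    intro h0
    have hae : ∀ᵐ ω ∂μ, Z ω = 1 := by
      have h0' : ∀ᵐ ω ∂μ, ¬ Z ω = 0 := by rw [ae_iff]; simpa using h0
      filter_upwards [h0'] with ω hω using (hZ01 ω).resolve_left hω
    exact hZlt.ne ((measure_congr (Filter.eventuallyEq_univ.2 hae)).trans measure_univ)
  have hone : Integrable (fun _ : Ω => (1 : ℝ)) μ := integrable_const 1
  have hD1i : Integrable D1 μ := by simpa using integrable_mul_of_zero_or_one hone hD1m hD101
  have hD0i : Integrable D0 μ := by simpa using integrable_mul_of_zero_or_one hone hD0m hD001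
  have hZi : Integrable Z μ := by simpa using integrable_mul_of_zero_or_one hone hZm hZ01
  have hi1 : IndepFun Z D1 μ :=
    hindep.comp (φ := id) (ψ := fun q : ℝ × ℝ × ℝ × ℝ => q.2.2.1) measurable_id (by fun_prop)
  have hi0 : IndepFun Z D0 μ :=
    hindep.comp (φ := id) (ψ := fun q : ℝ × ℝ × ℝ × ℝ => q.2.2.2) measurable_id (by fun_prop)
  have hiY1 : IndepFun Z (fun ω => Y1 ω * D1 ω + Y0 ω * (1 - D1 ω)) μ :=
    hindep.comp (φ := id)
      (ψ := fun q : ℝ × ℝ × ℝ × ℝ => q.1 * q.2.2.1 + q.2.1 * (1 - q.2.2.1))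
      measurable_id (by fun_prop)
  have hiY0 : IndepFun Z (fun ω => Y1 ω * D0 ω + Y0 ω * (1 - D0 ω)) μ :=
    hindep.comp (φ := id)
      (ψ := fun q : ℝ × ℝ × ℝ × ℝ => q.1 * q.2.2.2 + q.2.1 * (1 - q.2.2.2))
      measurable_id (by fun_prop)
  rw [integral_cond_of_indepFun μ hZm hD1m hi1 1 hZ1
    (fun ω h => by simp [hDdef, h])] at hk1
  rw [integral_cond_of_indepFun μ hZm hD0m hi0 0 hZ0
    (fun ω h => by simp [hDdef, h])] at hk2
  rw [integral_cond_of_indepFun μ hZm (by fun_prop) hiY1 1 hZ1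
      (fun ω h => by simp [hYdef, hDdef, h]),
    integral_cond_of_indepFun μ hZm (by fun_prop) hiY0 0 hZ0
      (fun ω h => by simp [hYdef, hDdef, h])] at hbeta
  have hfd : k1 - k2 = b - c := by
    have h := integral_mul_sub_eq μ hone hD1m hD0m hD101 hD001
    simp only [one_mul, integral_sub hD1i hD0i, setIntegral_const, smul_eq_mul, mul_one,
      measureReal_def] at h
    rw [hk1, hk2, hb, hc, h]
  have hY11 := integrable_mul_of_zero_or_one hY1int hD1m hD101
  have hY10 := integrable_mul_of_zero_or_one hY1int hD0m hD001
  have hY01 := integrable_mul_of_zero_or_one hY0int hD1m hD101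
  have hY00 := integrable_mul_of_zero_or_one hY0int hD0m hD001
  have hnum : (∫ ω, (Y1 ω * D1 ω + Y0 ω * (1 - D1 ω)) ∂μ)
      - ∫ ω, (Y1 ω * D0 ω + Y0 ω * (1 - D0 ω)) ∂μ = b * mu1 - c * mu2 := by
    have hA : Integrable (fun ω => Y1 ω * D1 ω + Y0 ω * (1 - D1 ω)) μ := by
      refine (hY11.add (hY0int.sub hY01)).congr (ae_of_all _ fun ω => ?_)
      simp only [Pi.add_apply, Pi.sub_apply]; ring
    have hB : Integrable (fun ω => Y1 ω * D0 ω + Y0 ω * (1 - D0 ω)) μ := by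
      refine (hY10.add (hY0int.sub hY00)).congr (ae_of_all _ fun ω => ?_)
      simp only [Pi.add_apply, Pi.sub_apply]; ring
    have h := integral_mul_sub_eq μ (hY1int.sub hY0int) hD1m hD0m hD101 hD001
    simp only [Pi.sub_apply] at h
    rw [hmu1, hmu2, integral_cond_eq, integral_cond_eq, ← hb, ← hc,
      mul_inv_cancel_left₀ hbpos.ne', mul_inv_cancel_left₀ hcpos.ne', ← h, ← integral_sub hA hB]
    congr 1
    ext ω
    ring
  have hbc : 0 < b - c := by
    have hp1 := hi1.integral_fun_mul_eq_mul_integral hZm.aestronglyMeasurable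
      hD1m.aestronglyMeasurable
    have hp0 := hi0.integral_fun_mul_eq_mul_integral hZm.aestronglyMeasurable
      hD0m.aestronglyMeasurable
    have e1 : ∫ ω, D ω * Z ω ∂μ = ∫ ω, Z ω * D1 ω ∂μ := by
      congr 1
      ext ω
      rcases hZ01 ω with h | h <;> simp [hDdef, h]
    have hZD1 := integrable_mul_of_zero_or_one hZi hD1m hD101
    have hZD0 := integrable_mul_of_zero_or_one hZi hD0m hD001
    have e2 : ∫ ω, D ω ∂μ
        = (∫ ω, Z ω * D1 ω ∂μ) + ((∫ ω, D0 ω ∂μ) - ∫ ω, Z ω * D0 ω ∂μ) := by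
      have hsub : Integrable (fun ω => D0 ω - Z ω * D0 ω) μ := hD0i.sub hZD0
      rw [← integral_sub hD0i hZD0, ← integral_add hZD1 hsub]
      congr 1
      ext ω
      simp only [hDdef]
      ring
    have hp : 0 ≤ ∫ ω, Z ω ∂μ :=
      integral_nonneg fun ω => by rcases hZ01 ω with h | h <;> simp [h]
    have hp' : ∫ ω, Z ω ∂μ ≤ 1 := by
      have h := integral_mono hZi hone fun ω => by rcases hZ01 ω with h | h <;> simp [h]
      simpa using h
    rw [e1, e2, hp1, hp0, ← hk1, ← hk2] at hcov
    rw [← hfd]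
    have hcov' : 0 < ((∫ ω, Z ω ∂μ) * (1 - ∫ ω, Z ω ∂μ)) * (k1 - k2) := by
      convert hcov using 1
      ring
    exact pos_of_mul_pos_right hcov' (mul_nonneg hp (sub_nonneg.2 hp'))
  rw [hnum, hfd] at hbeta
  have hmu1ne : mu1 ≠ 0 := by
    intro h
    have h2 : mu2 = 0 := by simpa [h] using hmu
    exact hbeta0 (by simp [hbeta, h, h2])
  have hle : mu1 * mu2 ≤ mu1 ^ 2 := by
    calc mu1 * mu2 ≤ |mu1| * |mu2| := by rw [← abs_mul]; exact le_abs_self _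
      _ ≤ |mu1| * |mu1| := by gcongr
      _ = mu1 ^ 2 := by rw [abs_mul_abs_self, sq]
  have hsq : 0 < mu1 ^ 2 := by positivity
  rw [hbeta, ← mul_div_assoc]
  refine div_pos ?_ hbc
  nlinarith [mul_pos hbc hsq, mul_le_mul_of_nonneg_left hle hcpos.le]
end

section
/- Under the potential-outcomes IV setup, define for d1, d0 ∈ {0,1} with P(D(1)=d1, D(0)=d0) > 0 the conditional cdfs F_{d1,d0}(y) = P(Y(1) ≤ y | D(1)=d1, D(0)=d0) and G_{d1,d0}(y) = P(Y(0) ≤ y | D(1)=d1, D(0)=d0). Then for every y ∈ ℝ: (i) if a+b > 0, P(Y ≤ y | D=1, Z=1) = F_{1,1}(y)·a/(a+b) + F_{1,0}(y)·b/(a+b); (ii) if a+c > 0, P(Y ≤ y | D=1, Z=0) = F_{1,1}(y)·a/(a+c) + F_{0,1}(y)·c/(a+c); (iii) if 1−a−b > 0, P(Y ≤ y | D=0, Z=1) = G_{0,1}(y)·c/(1−a−b) + G_{0,0}(y)·(1−a−b−c)/(1−a−b); (iv) if 1−a−c > 0, P(Y ≤ y | D=0, Z=0) = G_{1,0}(y)·b/(1−a−c)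 + G_{0,0}(y)·(1−a−b−c)/(1−a−c). (In cases (ii) with c = 0, (iii) with c = 0, and (iv) with b = 0 the corresponding term with zero weight is dropped.) -/
/-!
Conditioning on `D = d, Z = z` restricts to `Z = z` together with one of two disjoint types of units:
those whose potential treatment under `z` equals `d`. On this event `Y` is the potential outcome
`Y(d)`, and `Z` is independent of the potential outcomes and types, so the factor `P(Z = z)` cancels
and the law of total probability over the two types gives the mixture. This common argument is
`cond_inter_union_eq_mixture`; each of the four claims is an instance of it.
-/

open MeasureTheory ProbabilityTheory

set_option linter.unusedVariables false

/-- If `W` is independent of `A ∪ B` and of `(A ∪ B) ∩ S`, conditioning `S` on `W ∩ (A ∪ B)` gives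
the mixture of its conditional probabilities given the disjoint sets `A` and `B`. The event `T` may
differ from `S` outside the conditioning event `C`. Null `A` or `B` are allowed: the corresponding
term has weight `0`. -/
lemma cond_inter_union_eq_mixture {Ω : Type*} [MeasurableSpace Ω] (μ : Measure Ω)
    [IsProbabilityMeasure μ] {W A B S T C : Set Ω}
    (hW : MeasurableSet W) (hA : MeasurableSet A) (hB : MeasurableSet B) (hS : MeasurableSet S)
    (hW0 : μ W ≠ 0) (hAB : Disjoint A B)
    (hC : C = W ∩ (A ∪ B)) (hTS : C ∩ T = W ∩ ((A ∪ B) ∩ S))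
    (hi : μ (W ∩ (A ∪ B)) = μ W * μ (A ∪ B))
    (hiS : μ (W ∩ ((A ∪ B) ∩ S)) = μ W * μ ((A ∪ B) ∩ S)) :
    ((μ[|C]) T).toReal
      = ((μ[|A]) S).toReal * ((μ A).toReal / ((μ A).toReal + (μ B).toReal))
        + ((μ[|B]) S).toReal * ((μ B).toReal / ((μ A).toReal + (μ B).toReal)) := by
  have hCm : MeasurableSet C := hC ▸ hW.inter (hA.union hB)
  have hw : (μ W).toReal ≠ 0 := ENNReal.toReal_ne_zero.2 ⟨hW0, measure_ne_top _ _⟩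
  have key : ∀ E : Set Ω, MeasurableSet E →
      ((μ[|E]) S).toReal * (μ E).toReal = (μ (E ∩ S)).toReal := by
    intro E hE
    rw [← ENNReal.toReal_mul, cond_mul_eq_inter hE]
  have hsum : (μ (A ∪ B)).toReal = (μ A).toReal + (μ B).toReal := by
    rw [measure_union hAB hB, ENNReal.toReal_add (measure_ne_top _ _) (measure_ne_top _ _)]
  have hsumS : (μ ((A ∪ B) ∩ S)).toReal = (μ (A ∩ S)).toReal + (μ (B ∩ S)).toReal := by
    rw [Set.union_inter_distrib_right,
      measure_union (hAB.mono Set.inter_subset_left Set.inter_subset_left) (hB.inter hS),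
      ENNReal.toReal_add (measure_ne_top _ _) (measure_ne_top _ _)]
  rw [cond_apply hCm, hTS, hC, hi, hiS, ENNReal.toReal_mul, ENNReal.toReal_inv,
    ENNReal.toReal_mul, ENNReal.toReal_mul, hsum, hsumS, ← key A hA, ← key B hB, mul_inv]
  field_simp

theorem stmt5 {Ω : Type*} [MeasurableSpace Ω] (μ : Measure Ω) [IsProbabilityMeasure μ]
    (Y1 Y0 Z D1 D0 : Ω → ℝ)
    (hY1m : Measurable Y1) (hY0m : Measurable Y0) (hZm : Measurable Z)
    (hD1m : Measurable D1) (hD0m : Measurable D0)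
    (hZ01 : ∀ ω, Z ω = 0 ∨ Z ω = 1)
    (hD101 : ∀ ω, D1 ω = 0 ∨ D1 ω = 1)
    (hD001 : ∀ ω, D0 ω = 0 ∨ D0 ω = 1)
    (hZpos : 0 < μ {ω | Z ω = 1})
    (hZlt : μ {ω | Z ω = 1} < 1)
    (hindep : IndepFun Z (fun ω => (Y1 ω, Y0 ω, D1 ω, D0 ω)) μ)
    (D Y : Ω → ℝ)
    (hDdef : D = fun ω => D1 ω * Z ω + D0 ω * (1 - Z ω))
    (hYdef : Y = fun ω => Y1 ω * D ω + Y0 ω * (1 - D ω))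
    (a b c : ℝ)
    (ha : a = (μ {ω | D1 ω = 1 ∧ D0 ω = 1}).toReal)
    (hb : b = (μ {ω | D1 ω = 1 ∧ D0 ω = 0}).toReal)
    (hc : c = (μ {ω | D1 ω = 0 ∧ D0 ω = 1}).toReal)
    (F11 F10 F01 G11 G10 G01 G00 : ℝ → ℝ)
    (hF11 : ∀ y, F11 y = ((μ[|{ω | D1 ω = 1 ∧ D0 ω = 1}]) {ω | Y1 ω ≤ y}).toReal)
    (hF10 : ∀ y, F10 y = ((μ[|{ω | D1 ω = 1 ∧ D0 ω = 0}]) {ω | Y1 ω ≤ y}).toReal)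
    (hF01 : ∀ y, F01 y = ((μ[|{ω | D1 ω = 0 ∧ D0 ω = 1}]) {ω | Y1 ω ≤ y}).toReal)
    (hG11 : ∀ y, G11 y = ((μ[|{ω | D1 ω = 1 ∧ D0 ω = 1}]) {ω | Y0 ω ≤ y}).toReal)
    (hG10 : ∀ y, G10 y = ((μ[|{ω | D1 ω = 1 ∧ D0 ω = 0}]) {ω | Y0 ω ≤ y}).toReal)
    (hG01 : ∀ y, G01 y = ((μ[|{ω | D1 ω = 0 ∧ D0 ω = 1}]) {ω | Y0 ω ≤ y}).toReal)
    (hG00 : ∀ y, G00 y = ((μ[|{ω | D1 ω = 0 ∧ D0 ω = 0}]) {ω | Y0 ω ≤ y}).toReal) :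
    ∀ y : ℝ,
      (0 < a + b →
        ((μ[|{ω | D ω = 1 ∧ Z ω = 1}]) {ω | Y ω ≤ y}).toReal
          = F11 y * (a / (a + b)) + F10 y * (b / (a + b))) ∧
      (0 < a + c →
        ((μ[|{ω | D ω = 1 ∧ Z ω = 0}]) {ω | Y ω ≤ y}).toReal
          = F11 y * (a / (a + c)) + F01 y * (c / (a + c))) ∧
      (0 < 1 - a - b →
        ((μ[|{ω | D ω = 0 ∧ Z ω = 1}]) {ω | Y ω ≤ y}).toReal
          = G01 y * (c / (1 - a - b)) + G00 y * ((1 - a - b - c) / (1 - a - b))) ∧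
      (0 < 1 - a - c →
        ((μ[|{ω | D ω = 0 ∧ Z ω = 0}]) {ω | Y ω ≤ y}).toReal
          = G10 y * (b / (1 - a - c)) + G00 y * ((1 - a - b - c) / (1 - a - c))) := by
  intro y
  have hX : Measurable fun ω => (Y1 ω, Y0 ω, D1 ω, D0 ω) :=
    hY1m.prodMk (hY0m.prodMk (hD1m.prodMk hD0m))
  have hWm : ∀ z : ℝ, MeasurableSet {ω | Z ω = z} := fun z => hZm (measurableSet_singleton z)
  have hDm : ∀ d e : ℝ, MeasurableSet {ω | D1 ω = d ∧ D0 ω = e} := fun d e =>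
    (hD1m (measurableSet_singleton d)).inter (hD0m (measurableSet_singleton e))
  have hQm : ∀ d e : ℝ, MeasurableSet {p : ℝ × ℝ × ℝ × ℝ | p.2.2.1 = d ∧ p.2.2.2 = e} :=
    fun d e => (measurableSet_eq_fun (by fun_prop) (by fun_prop)).inter
      (measurableSet_eq_fun (by fun_prop) (by fun_prop))
  have hQ1 : MeasurableSet {p : ℝ × ℝ × ℝ × ℝ | p.1 ≤ y} :=
    measurableSet_le (by fun_prop) (by fun_prop)
  have hQ0 : MeasurableSet {p : ℝ × ℝ × ℝ × ℝ | p.2.1 ≤ y} :=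
    measurableSet_le (by fun_prop) (by fun_prop)
  have hI : ∀ (z : ℝ) (Q : Set (ℝ × ℝ × ℝ × ℝ)), MeasurableSet Q →
      μ ({ω | Z ω = z} ∩ {ω | (Y1 ω, Y0 ω, D1 ω, D0 ω) ∈ Q})
        = μ {ω | Z ω = z} * μ {ω | (Y1 ω, Y0 ω, D1 ω, D0 ω) ∈ Q} := fun z Q hQ =>
    hindep.measure_inter_preimage_eq_mul _ _ (measurableSet_singleton z) hQ
  have hZ0 : μ {ω | Z ω = 0} ≠ 0 := by
    have hcompl : {ω | Z ω = 0} = {ω | Z ω = 1}ᶜ := by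
      ext ω
      rcases hZ01 ω with h | h <;> simp [h]
    rw [hcompl, Ne, prob_compl_eq_zero_iff (hWm 1)]
    exact hZlt.ne
  have hdisj : ∀ d e d' e' : ℝ, (d ≠ d' ∨ e ≠ e') →
      Disjoint {ω | D1 ω = d ∧ D0 ω = e} {ω | D1 ω = d' ∧ D0 ω = e'} := by
    intro d e d' e' hne
    rw [Set.disjoint_left]
    rintro ω ⟨h1, h2⟩ ⟨h3, h4⟩
    rcases hne with h | h
    · exact h (h1.symm.trans h3)
    · exact h (h2.symm.trans h4)
  -- The four types partition `Ω`, so never takers have probability `1 - a - b - c`.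
  have hn : (μ {ω | D1 ω = 0 ∧ D0 ω = 0}).toReal = 1 - a - b - c := by
    have hcompl : {ω | D1 ω = 0 ∧ D0 ω = 0} = ({ω | D1 ω = 1 ∧ D0 ω = 1} ∪
        ({ω | D1 ω = 1 ∧ D0 ω = 0} ∪ {ω | D1 ω = 0 ∧ D0 ω = 1}))ᶜ := by
      ext ω
      rcases hD101 ω with h | h <;> rcases hD001 ω with h' | h' <;> simp [h, h']
    have hm := (hDm 1 0).union (hDm 0 1)
    change μ.real _ = _
    rw [hcompl, probReal_compl_eq_one_sub ((hDm 1 1).union hm),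
      measureReal_union (Set.disjoint_union_right.2
        ⟨hdisj 1 1 1 0 (by norm_num), hdisj 1 1 0 1 (by norm_num)⟩) hm,
      measureReal_union (hdisj 1 0 0 1 (by norm_num)) (hDm 0 1), ha, hb, hc]
    simp only [measureReal_def]
    ring
  -- The common shape of the four claims, for a value `z` of the
  -- instrument, two types and an event `S` about the potential outcomes.
  have main : ∀ (z d e d' e' : ℝ) (S T C : Set Ω) (Q : Set (ℝ × ℝ × ℝ × ℝ)),
      MeasurableSet Q → S = {ω | (Y1 ω, Y0 ω, D1 ω, D0 ω) ∈ Q} →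
      μ {ω | Z ω = z} ≠ 0 → (d ≠ d' ∨ e ≠ e') →
      C = {ω | Z ω = z} ∩ ({ω | D1 ω = d ∧ D0 ω = e} ∪ {ω | D1 ω = d' ∧ D0 ω = e'}) →
      C ∩ T = {ω | Z ω = z} ∩
        (({ω | D1 ω = d ∧ D0 ω = e} ∪ {ω | D1 ω = d' ∧ D0 ω = e'}) ∩ S) →
      ((μ[|C]) T).toReal =
        ((μ[|{ω | D1 ω = d ∧ D0 ω = e}]) S).toReal * ((μ {ω | D1 ω = d ∧ D0 ω = e}).toReal /
          ((μ {ω | D1 ω = d ∧ D0 ω = e}).toReal + (μ {ω | D1 ω = d' ∧ D0 ω = e'}).toReal)) +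
        ((μ[|{ω | D1 ω = d' ∧ D0 ω = e'}]) S).toReal * ((μ {ω | D1 ω = d' ∧ D0 ω = e'}).toReal /
          ((μ {ω | D1 ω = d ∧ D0 ω = e}).toReal + (μ {ω | D1 ω = d' ∧ D0 ω = e'}).toReal)) := by
    intro z d e d' e' S T C Q hQ hSQ hz hne hC hTS
    exact cond_inter_union_eq_mixture μ (hWm z) (hDm d e) (hDm d' e') (hSQ ▸ hX hQ) hz
      (hdisj d e d' e' hne) hC hTS (hI z _ ((hQm d e).union (hQm d' e')))
      (hSQ ▸ hI z _ (((hQm d e).union (hQm d' e')).inter hQ))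
  refine ⟨fun _ => ?_, fun _ => ?_, fun _ => ?_, fun _ => ?_⟩
  · rw [hF11, hF10, ha, hb]
    refine main 1 1 1 1 0 {ω | Y1 ω ≤ y} _ _ _ hQ1 rfl hZpos.ne' (by norm_num) ?_ ?_ <;>
    · ext ω
      rcases hZ01 ω with h | h <;> rcases hD101 ω with h1 | h1 <;> rcases hD001 ω with h0 | h0 <;>
        simp [hYdef, hDdef, h, h1, h0]
  · rw [hF11, hF01, ha, hc]
    refine main 0 1 1 0 1 {ω | Y1 ω ≤ y} _ _ _ hQ1 rfl hZ0 (by norm_num) ?_ ?_ <;>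
    · ext ω
      rcases hZ01 ω with h | h <;> rcases hD101 ω with h1 | h1 <;> rcases hD001 ω with h0 | h0 <;>
        simp [hYdef, hDdef, h, h1, h0]
  · have hden : 1 - a - b = c + (μ {ω | D1 ω = 0 ∧ D0 ω = 0}).toReal := by
      rw [hn]
      ring
    rw [hG01, hG00, ← hn, hden, hc]
    refine main 1 0 1 0 0 {ω | Y0 ω ≤ y} _ _ _ hQ0 rfl hZpos.ne' (by norm_num) ?_ ?_ <;>
    · ext ω
      rcases hZ01 ω with h | h <;> rcases hD101 ω with h1 | h1 <;> rcases hD001 ω with h0 | h0 <;>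
        simp [hYdef, hDdef, h, h1, h0]
  · have hden : 1 - a - c = b + (μ {ω | D1 ω = 0 ∧ D0 ω = 0}).toReal := by
      rw [hn]
      ring
    rw [hG10, hG00, ← hn, hden, hb]
    refine main 0 1 0 0 0 {ω | Y0 ω ≤ y} _ _ _ hQ0 rfl hZ0 (by norm_num) ?_ ?_ <;>
    · ext ω
      rcases hZ01 ω with h | h <;> rcases hD101 ω with h1 | h1 <;> rcases hD001 ω with h0 | h0 <;>
        simp [hYdef, hDdef, h, h1, h0]
end

section
/- Let β ∈ ℝ and λ ∈ [0, 1). Then for every μ2 ∈ ℝ, max{|λ·μ2 + (1−λ)·β|, |μ2|} ≥ |β|·(1−λ)/(1+λ), and there exists μ2 ∈ ℝ attaining equality, namely μ2 = −β(1−λ)/(1+λ). -/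
/-!
The lower bound is the triangle inequality: `(1 - lam) * beta` is the difference of
`lam * mu2 + (1 - lam) * beta` and `lam * mu2`, so `(1 - lam) * |beta|` is at most `1 + lam` times
the maximum. Equality holds at the `mu2` for which the two quantities inside the absolute values
are opposite numbers.
-/

open MeasureTheory ProbabilityTheory

set_option linter.unusedVariables false

theorem stmt6 (beta lam : ℝ) (hlam0 : 0 ≤ lam) (hlam1 : lam < 1) :
    (∀ mu2 : ℝ, |beta| * (1 - lam) / (1 + lam) ≤ max |lam * mu2 + (1 - lam) * beta| |mu2|) ∧
    (∃ mu2 : ℝ, mu2 = -(beta * (1 - lam) / (1 + lam)) ∧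
      max |lam * mu2 + (1 - lam) * beta| |mu2| = |beta| * (1 - lam) / (1 + lam)) := by
  have hpos : 0 < 1 + lam := by linarith
  have hsub : 0 ≤ 1 - lam := by linarith
  refine ⟨fun mu2 => ?_, _, rfl, ?_⟩
  · rw [div_le_iff₀ hpos]
    -- Triangle inequality for `(1 - lam) * beta = (lam * mu2 + (1 - lam) * beta) - lam * mu2`.
    have htri := abs_sub (lam * mu2 + (1 - lam) * beta) (lam * mu2)
    rw [add_sub_cancel_left, abs_mul, abs_mul lam mu2, abs_of_nonneg hsub,
      abs_of_nonneg hlam0] at htri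
    have hleft := le_max_left |lam * mu2 + (1 - lam) * beta| |mu2|
    have hright := mul_le_mul_of_nonneg_left
      (le_max_right |lam * mu2 + (1 - lam) * beta| |mu2|) hlam0
    linarith
  · -- For this `mu2`, the first quantity inside the absolute values is `-mu2`.
    have hopp : lam * -(beta * (1 - lam) / (1 + lam)) + (1 - lam) * beta
        = beta * (1 - lam) / (1 + lam) := by
      field_simp
      ring
    rw [hopp, abs_neg, max_self, abs_div, abs_mul, abs_of_nonneg hsub, abs_of_pos hpos]
end

section
/- Let k1, k2 be real numbers with 0 < k2 < k1, let c ∈ [0, k2], set b = k1 − k2 + c, and let β, μ2 ∈ ℝ. Define μ1 = (c/b)·μ2 + (1 − c/b)·β. Then max{|μ1|, |μ2|} ≥ |β|·(k1 − k2)/(k1 + k2). -/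
open MeasureTheory ProbabilityTheory

set_option linter.unusedVariables false

theorem stmt7 (k1 k2 c beta mu2 : ℝ) (hk2 : 0 < k2) (hk : k2 < k1)
    (hc0 : 0 ≤ c) (hck2 : c ≤ k2)
    (b mu1 : ℝ) (hb : b = k1 - k2 + c)
    (hmu1 : mu1 = (c / b) * mu2 + (1 - c / b) * beta) :
    |beta| * (k1 - k2) / (k1 + k2) ≤ max |mu1| |mu2| := by
  have hbpos : 0 < b := by linarith
  -- Clearing denominators gives `(k1 - k2) β = b μ1 - c μ2`; the triangle inequality and
  -- `b + c = k1 - k2 + 2 c ≤ k1 + k2` then bound the left side by `(k1 + k2) max(|μ1|, |μ2|)`.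
  have key : beta * (k1 - k2) = b * mu1 - c * mu2 := by
    have hbc : k1 - k2 = b - c := by linarith
    rw [hmu1, hbc]
    field_simp
    ring
  have hM : 0 ≤ max |mu1| |mu2| := le_max_of_le_left (abs_nonneg _)
  rw [div_le_iff₀ (by linarith)]
  calc |beta| * (k1 - k2) = |b * mu1 - c * mu2| := by
        rw [← key, abs_mul, abs_of_pos (sub_pos.2 hk)]
    _ ≤ |b * mu1| + |c * mu2| := abs_sub _ _
    _ = b * |mu1| + c * |mu2| := by
        rw [abs_mul, abs_mul, abs_of_pos hbpos, abs_of_nonneg hc0]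
    _ ≤ b * max |mu1| |mu2| + c * max |mu1| |mu2| := by
        gcongr
        · exact le_max_left _ _
        · exact le_max_right _ _
    _ = max |mu1| |mu2| * (b + c) := by ring
    _ ≤ max |mu1| |mu2| * (k1 + k2) := by
        gcongr
        linarith
end

section
/- Let k1, k2 be real numbers with 0 < k2 < k1 and let β ∈ ℝ. Then there exist c ∈ [0, k2] and μ2 ∈ ℝ such that, with b = k1 − k2 + c and μ1 = (c/b)·μ2 + (1 − c/b)·β, one has max{|μ1|, |μ2|} = |β|·(k1 − k2)/(k1 + k2); i.e., the lower bound |β|·(k1 − k2)/(k1 + k2) for max{|μ1|, |μ2|} is tight. -/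
open MeasureTheory ProbabilityTheory

set_option linter.unusedVariables false

theorem stmt8 (k1 k2 beta : ℝ) (hk2 : 0 < k2) (hk : k2 < k1) :
    ∃ c mu2 : ℝ, 0 ≤ c ∧ c ≤ k2 ∧
      max |(c / (k1 - k2 + c)) * mu2 + (1 - c / (k1 - k2 + c)) * beta| |mu2|
        = |beta| * (k1 - k2) / (k1 + k2) := by
  have h1 : k1 ≠ 0 := by linarith
  have h2 : 0 < k1 + k2 := by linarith
  have h3 : 0 < k1 - k2 := by linarith
  -- At the largest defier share `c = k2` (so `b = k1`), this `mu2` is the solution of `mu1 = -mu2`.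
  refine ⟨k2, -(beta * (k1 - k2) / (k1 + k2)), hk2.le, le_rfl, ?_⟩
  have e : (k2 / (k1 - k2 + k2)) * -(beta * (k1 - k2) / (k1 + k2))
      + (1 - k2 / (k1 - k2 + k2)) * beta = beta * (k1 - k2) / (k1 + k2) := by
    rw [sub_add_cancel]
    field_simp
    ring
  rw [e, abs_neg, max_self, abs_div, abs_mul, abs_of_pos h2, abs_of_pos h3]
end

section
/- Let b, c, β, μ2 be real numbers with b > c ≥ 0, b > 0 and β ≠ 0, and define μ1 = (c/b)·μ2 + (1 − c/b)·β. If |μ1| ≥ |μ2|, then μ1 and β have the same sign, i.e. μ1·β > 0. -/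
/-!
With `t = c / b ∈ [0, 1)`, the definition of `mu1` gives `(1 - t) * beta = mu1 - t * mu2`.
Multiplying by `mu1` and bounding `mu1 * mu2 ≤ |mu1| * |mu2| ≤ mu1 ^ 2` yields
`mu1 ^ 2 ≤ mu1 * beta`. Here `mu1 ≠ 0`, since otherwise `mu2 = 0` and hence `beta = 0`.
-/

open MeasureTheory ProbabilityTheory

set_option linter.unusedVariables false

theorem stmt9 (b c beta mu2 : ℝ) (hc0 : 0 ≤ c) (hcb : c < b) (hb : 0 < b)
    (hbeta : beta ≠ 0)
    (mu1 : ℝ) (hmu1 : mu1 = (c / b) * mu2 + (1 - c / b) * beta)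
    (h : |mu2| ≤ |mu1|) :
    0 < mu1 * beta := by
  have ht0 : 0 ≤ c / b := div_nonneg hc0 hb.le
  have ht1 : 0 < 1 - c / b := sub_pos.mpr ((div_lt_one hb).mpr hcb)
  generalize c / b = t at *
  have hmu1_ne : mu1 ≠ 0 := by
    rintro rfl
    have hmu2 : mu2 = 0 := by simpa using h
    rw [hmu2, mul_zero, zero_add] at hmu1
    exact mul_ne_zero ht1.ne' hbeta hmu1.symm
  have hprod : mu1 * mu2 ≤ mu1 ^ 2 := calc
    mu1 * mu2 ≤ |mu1| * |mu2| := (le_abs_self _).trans (abs_mul _ _).le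
    _ ≤ |mu1| * |mu1| := by gcongr
    _ = mu1 ^ 2 := by rw [abs_mul_abs_self, sq]
  have hle : (1 - t) * mu1 ^ 2 ≤ (1 - t) * (mu1 * beta) := by
    have hexp : (1 - t) * (mu1 * beta) = mu1 ^ 2 - t * (mu1 * mu2) := by
      linear_combination (-mu1) * hmu1
    have := mul_le_mul_of_nonneg_left hprod ht0
    linarith
  exact (sq_pos_of_ne_zero hmu1_ne).trans_le (le_of_mul_le_mul_left hle ht1)
end

section
/- Under the potential-outcomes IV setup, suppose Y(1), Y(0) ∈ {0,1} almost surely, b > c ≥ 0 (so b > 0 and k1 − k2 = b − c > 0), β < 0, and there is η ≥ 0 with c ≤ η and η < |β|·(k1 − k2). Then μ1 < 0, i.e. sign(μ1) = sign(β). -/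
/-!
Write `ITT = E[Y | Z = 1] - E[Y | Z = 0]`. Given `Z = z`, the outcome `Y` is a function of
`(Y1, Y0, D1, D0)`, so independence (`integral_cond_of_indep`) gives
`ITT = E[(Y1 - Y0) (D1 - D0)]`, that is, the complier contribution `E[(Y1 - Y0) 1_C]` minus the
defier contribution. As outcomes are binary the latter is at most `c`, hence
`E[(Y1 - Y0) 1_C] ≤ ITT + c`. The key inequality forces `k1 - k2 > 0`, so
`ITT = beta (k1 - k2) < -eta ≤ -c`, and the complier contribution is negative.
-/

open MeasureTheory ProbabilityTheory

set_option linter.unusedVariables false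

/-- Conditioning on a non-null event of `Z` does not change the expectation of a function of
a vector `W` independent of `Z`. -/
lemma integral_cond_of_indep {Ω E : Type*} [MeasurableSpace Ω] [MeasurableSpace E]
    (μ : Measure Ω) [IsProbabilityMeasure μ] (Z : Ω → ℝ) (W : Ω → E)
    (hZ : Measurable Z) (hW : Measurable W) (hind : IndepFun Z W μ) (z : ℝ)
    (hz : μ {ω | Z ω = z} ≠ 0) (g : E → ℝ) (hg : Measurable g) :
    ∫ ω, g (W ω) ∂(μ[|{ω | Z ω = z}]) = ∫ ω, g (W ω) ∂μ := by
  have hmap : (μ[|{ω | Z ω = z}]).map W = μ.map W := by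
    ext s hs
    have hms : MeasurableSet {ω | Z ω = z} := hZ (measurableSet_singleton z)
    have h := hind.measure_inter_preimage_eq_mul {z} s (measurableSet_singleton z) hs
    change μ ({ω | Z ω = z} ∩ W ⁻¹' s) = μ {ω | Z ω = z} * μ (W ⁻¹' s) at h
    rw [Measure.map_apply hW hs, Measure.map_apply hW hs, cond_apply hms, h, ← mul_assoc,
      ENNReal.inv_mul_cancel hz (measure_ne_top _ _), one_mul]
  rw [← integral_map hW.aemeasurable hg.aestronglyMeasurable, hmap,
    integral_map hW.aemeasurable hg.aestronglyMeasurable]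

theorem stmt12 {Ω : Type*} [MeasurableSpace Ω] (μ : Measure Ω) [IsProbabilityMeasure μ]
    (Y1 Y0 Z D1 D0 : Ω → ℝ)
    (hY1m : Measurable Y1) (hY0m : Measurable Y0) (hZm : Measurable Z)
    (hD1m : Measurable D1) (hD0m : Measurable D0)
    (hZ01 : ∀ ω, Z ω = 0 ∨ Z ω = 1)
    (hD101 : ∀ ω, D1 ω = 0 ∨ D1 ω = 1)
    (hD001 : ∀ ω, D0 ω = 0 ∨ D0 ω = 1)
    (hZpos : 0 < μ {ω | Z ω = 1})
    (hZlt : μ {ω | Z ω = 1} < 1)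
    (hindep : IndepFun Z (fun ω => (Y1 ω, Y0 ω, D1 ω, D0 ω)) μ)
    (D Y : Ω → ℝ)
    (hDdef : D = fun ω => D1 ω * Z ω + D0 ω * (1 - Z ω))
    (hYdef : Y = fun ω => Y1 ω * D ω + Y0 ω * (1 - D ω))
    (a b c : ℝ)
    (ha : a = (μ {ω | D1 ω = 1 ∧ D0 ω = 1}).toReal)
    (hb : b = (μ {ω | D1 ω = 1 ∧ D0 ω = 0}).toReal)
    (hc : c = (μ {ω | D1 ω = 0 ∧ D0 ω = 1}).toReal)
    (k1 k2 : ℝ)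
    (hk1 : k1 = ∫ ω, D ω ∂(μ[|{ω | Z ω = 1}]))
    (hk2 : k2 = ∫ ω, D ω ∂(μ[|{ω | Z ω = 0}]))
    (mu1 mu2 : ℝ)
    (hmu1 : mu1 = ∫ ω, (Y1 ω - Y0 ω) ∂(μ[|{ω | D1 ω = 1 ∧ D0 ω = 0}]))
    (hmu2 : mu2 = ∫ ω, (Y1 ω - Y0 ω) ∂(μ[|{ω | D1 ω = 0 ∧ D0 ω = 1}]))
    (beta : ℝ)
    (hbeta : beta = ((∫ ω, Y ω ∂(μ[|{ω | Z ω = 1}])) - ∫ ω, Y ω ∂(μ[|{ω | Z ω = 0}])) / (k1 - k2))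
    (hbinary : ∀ᵐ ω ∂μ, (Y1 ω = 0 ∨ Y1 ω = 1) ∧ (Y0 ω = 0 ∨ Y0 ω = 1))
    (hc0 : 0 ≤ c) (hcb : c < b) (hbetaneg : beta < 0)
    (eta : ℝ) (heta0 : 0 ≤ eta) (hceta : c ≤ eta)
    (hkey : eta < |beta| * (k1 - k2)) :
    mu1 < 0 := by
  classical
  have hW : Measurable (fun ω => (Y1 ω, Y0 ω, D1 ω, D0 ω)) := by fun_prop
  have hZ0 : μ {ω | Z ω = 0} ≠ 0 := by
    intro h0
    have hcov : (Set.univ : Set Ω) ⊆ {ω | Z ω = 0} ∪ {ω | Z ω = 1} := fun ω _ => hZ01 ω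
    have h1 : μ Set.univ ≤ μ {ω | Z ω = 0} + μ {ω | Z ω = 1} :=
      (measure_mono hcov).trans (measure_union_le _ _)
    rw [measure_univ, h0, zero_add] at h1
    exact absurd hZlt (not_lt.mpr h1)
  have hE1 : ∫ ω, Y ω ∂(μ[|{ω | Z ω = 1}]) = ∫ ω, (Y1 ω * D1 ω + Y0 ω * (1 - D1 ω)) ∂μ := by
    rw [← integral_cond_of_indep μ Z _ hZm hW hindep 1 hZpos.ne'
      (fun p => p.1 * p.2.2.1 + p.2.1 * (1 - p.2.2.1)) (by fun_prop)]
    apply integral_congr_ae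
    filter_upwards [ae_cond_mem (μ := μ) (hZm (measurableSet_singleton 1))] with ω hω
    have hω' : Z ω = 1 := hω
    simp [hYdef, hDdef, hω']
  have hE0 : ∫ ω, Y ω ∂(μ[|{ω | Z ω = 0}]) = ∫ ω, (Y1 ω * D0 ω + Y0 ω * (1 - D0 ω)) ∂μ := by
    rw [← integral_cond_of_indep μ Z _ hZm hW hindep 0 hZ0
      (fun p => p.1 * p.2.2.2 + p.2.1 * (1 - p.2.2.2)) (by fun_prop)]
    apply integral_congr_ae
    filter_upwards [ae_cond_mem (μ := μ) (hZm (measurableSet_singleton 0))] with ω hω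
    have hω' : Z ω = 0 := hω
    simp [hYdef, hDdef, hω']
  have hC : MeasurableSet {ω | D1 ω = 1 ∧ D0 ω = 0} :=
    (hD1m (measurableSet_singleton 1)).inter (hD0m (measurableSet_singleton 0))
  have hF : MeasurableSet {ω | D1 ω = 0 ∧ D0 ω = 1} :=
    (hD1m (measurableSet_singleton 0)).inter (hD0m (measurableSet_singleton 1))
  have hI1 : Integrable (fun ω => Y1 ω * D1 ω + Y0 ω * (1 - D1 ω)) μ := by
    refine Integrable.of_bound (Measurable.aestronglyMeasurable (by fun_prop)) 1 ?_
    filter_upwards [hbinary] with ω h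
    rcases h with ⟨h1 | h1, h0 | h0⟩ <;> rcases hD101 ω with hd | hd <;> simp [h1, h0, hd]
  have hI0 : Integrable (fun ω => Y1 ω * D0 ω + Y0 ω * (1 - D0 ω)) μ := by
    refine Integrable.of_bound (Measurable.aestronglyMeasurable (by fun_prop)) 1 ?_
    filter_upwards [hbinary] with ω h
    rcases h with ⟨h1 | h1, h0 | h0⟩ <;> rcases hD001 ω with hd | hd <;> simp [h1, h0, hd]
  have hId : Integrable (fun ω => Y1 ω - Y0 ω) μ := by
    refine Integrable.of_bound (Measurable.aestronglyMeasurable (by fun_prop)) 1 ?_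
    filter_upwards [hbinary] with ω h
    rcases h with ⟨h1 | h1, h0 | h0⟩ <;> simp [h1, h0]
  have hmain : (∫ ω in {ω | D1 ω = 1 ∧ D0 ω = 0}, (Y1 ω - Y0 ω) ∂μ) - c ≤
      (∫ ω, Y ω ∂(μ[|{ω | Z ω = 1}])) - ∫ ω, Y ω ∂(μ[|{ω | Z ω = 0}]) := by
    have hcint : c = ∫ ω, Set.indicator {ω | D1 ω = 0 ∧ D0 ω = 1} (fun _ => (1 : ℝ)) ω ∂μ := by
      rw [integral_indicator hF, hc]
      simp [Measure.real]
    have hF1 : Integrable (Set.indicator {ω | D1 ω = 0 ∧ D0 ω = 1} (fun _ => (1 : ℝ))) μ :=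
      (integrable_const (1 : ℝ)).indicator hF
    rw [hE1, hE0, ← integral_sub hI1 hI0, ← integral_indicator hC, hcint,
      ← integral_sub (hId.indicator hC) hF1]
    refine integral_mono_ae ((hId.indicator hC).sub hF1) (hI1.sub hI0) ?_
    filter_upwards [hbinary] with ω h
    rcases h with ⟨h1 | h1, h0 | h0⟩ <;> rcases hD101 ω with hd | hd <;>
      rcases hD001 ω with he | he <;> simp [Set.indicator, h1, h0, hd, he]
  have hkpos : 0 < k1 - k2 :=
    pos_of_mul_pos_right (lt_of_le_of_lt heta0 hkey) (abs_nonneg beta)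
  have hitt : (∫ ω, Y ω ∂(μ[|{ω | Z ω = 1}])) - ∫ ω, Y ω ∂(μ[|{ω | Z ω = 0}])
      = beta * (k1 - k2) := by
    rw [hbeta, div_mul_cancel₀ _ hkpos.ne']
  rw [abs_of_neg hbetaneg] at hkey
  have hneg : ∫ ω in {ω | D1 ω = 1 ∧ D0 ω = 0}, (Y1 ω - Y0 ω) ∂μ < 0 := by linarith
  have hbpos : 0 < b := lt_of_le_of_lt hc0 hcb
  rw [hmu1, ProbabilityTheory.cond, integral_smul_measure, ENNReal.toReal_inv, ← hb, smul_eq_mul]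
  exact mul_neg_of_pos_of_neg (inv_pos.mpr hbpos) hneg
end

section
/- Under the potential-outcomes IV setup, suppose Y(1), Y(0) ∈ {0,1} almost surely, b > c ≥ 0 (so b > 0 and k1 − k2 = b − c > 0), P(Z=0) > 0, β < 0, and β·(k1 − k2) + P(Y=1, D=1 | Z=0) < 0 (equivalently, P(Y=1, D=1 | Z=0) < |β|·(k1 − k2)). Then μ1 < 0, i.e. sign(μ1) = sign(β). -/
open MeasureTheory ProbabilityTheory

set_option linter.unusedVariables false

/-!
Write `X = (Y1, Y0, D1, D0)` and `g_z = Y1 * D_z + Y0 * (1 - D_z)`. On `{Z = z}` the realized outcome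
is `g_z`, a function of `X`, and conditioning on `Z = z` does not change the law of `X`
(`map_cond_eq_of_indepFun`). Hence `beta * (k1 - k2) = E[g_1] - E[g_0]`, and similarly
`P(Y = 1, D = 1 | Z = 0) = P(Y1 = 1, D0 = 1)`. Pointwise, with binary outcomes,
`1_{complier} * (Y1 - Y0) = (g_1 - g_0) + 1_{defier} * (Y1 - Y0) ≤ (g_1 - g_0) + 1_{Y1 = 1, D0 = 1}`.
Integrating bounds `b * mu1` by the quantity assumed negative.
-/

/-- Conditioning on an event of positive probability determined by `Z` leaves the law of any `X`
independent of `Z` unchanged. -/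
lemma map_cond_eq_of_indepFun {Ω E : Type*} [MeasurableSpace Ω] [MeasurableSpace E]
    {μ : Measure Ω} [IsProbabilityMeasure μ] {Z : Ω → ℝ} {X : Ω → E}
    (hZ : Measurable Z) (hX : Measurable X) (h : IndepFun Z X μ) (z : ℝ)
    (hz : 0 < μ {ω | Z ω = z}) :
    (μ[|{ω | Z ω = z}]).map X = μ.map X := by
  have hm : MeasurableSet {ω | Z ω = z} := hZ (measurableSet_singleton z)
  ext s hs
  rw [Measure.map_apply hX hs, Measure.map_apply hX hs, cond_apply hm]
  have := h.measure_inter_preimage_eq_mul {z} s (measurableSet_singleton z) hs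
  change μ ({ω | Z ω = z} ∩ X ⁻¹' s) = μ {ω | Z ω = z} * μ (X ⁻¹' s) at this
  rw [this, ← mul_assoc, ENNReal.inv_mul_cancel hz.ne' (measure_ne_top _ _), one_mul]

theorem stmt13 {Ω : Type*} [MeasurableSpace Ω] (μ : Measure Ω) [IsProbabilityMeasure μ]
    (Y1 Y0 Z D1 D0 : Ω → ℝ)
    (hY1m : Measurable Y1) (hY0m : Measurable Y0) (hZm : Measurable Z)
    (hD1m : Measurable D1) (hD0m : Measurable D0)
    (hZ01 : ∀ ω, Z ω = 0 ∨ Z ω = 1)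
    (hD101 : ∀ ω, D1 ω = 0 ∨ D1 ω = 1)
    (hD001 : ∀ ω, D0 ω = 0 ∨ D0 ω = 1)
    (hZpos : 0 < μ {ω | Z ω = 1})
    (hZlt : μ {ω | Z ω = 1} < 1)
    (hindep : IndepFun Z (fun ω => (Y1 ω, Y0 ω, D1 ω, D0 ω)) μ)
    (D Y : Ω → ℝ)
    (hDdef : D = fun ω => D1 ω * Z ω + D0 ω * (1 - Z ω))
    (hYdef : Y = fun ω => Y1 ω * D ω + Y0 ω * (1 - D ω))
    (a b c : ℝ)
    (ha : a = (μ {ω | D1 ω = 1 ∧ D0 ω = 1}).toReal)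
    (hb : b = (μ {ω | D1 ω = 1 ∧ D0 ω = 0}).toReal)
    (hc : c = (μ {ω | D1 ω = 0 ∧ D0 ω = 1}).toReal)
    (k1 k2 : ℝ)
    (hk1 : k1 = ∫ ω, D ω ∂(μ[|{ω | Z ω = 1}]))
    (hk2 : k2 = ∫ ω, D ω ∂(μ[|{ω | Z ω = 0}]))
    (mu1 mu2 : ℝ)
    (hmu1 : mu1 = ∫ ω, (Y1 ω - Y0 ω) ∂(μ[|{ω | D1 ω = 1 ∧ D0 ω = 0}]))
    (hmu2 : mu2 = ∫ ω, (Y1 ω - Y0 ω) ∂(μ[|{ω | D1 ω = 0 ∧ D0 ω = 1}]))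
    (beta : ℝ)
    (hbeta : beta = ((∫ ω, Y ω ∂(μ[|{ω | Z ω = 1}])) - ∫ ω, Y ω ∂(μ[|{ω | Z ω = 0}])) / (k1 - k2))
    (hbinary : ∀ᵐ ω ∂μ, (Y1 ω = 0 ∨ Y1 ω = 1) ∧ (Y0 ω = 0 ∨ Y0 ω = 1))
    (hc0 : 0 ≤ c) (hcb : c < b)
    (hZ0pos : 0 < μ {ω | Z ω = 0})
    (hbetaneg : beta < 0)
    (hkey : beta * (k1 - k2) + ((μ[|{ω | Z ω = 0}]) {ω | Y ω = 1 ∧ D ω = 1}).toReal < 0) :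
    mu1 < 0 := by
  have hk : k1 - k2 ≠ 0 := by
    -- otherwise `beta` is a quotient by zero, hence `0`
    intro h
    rw [h, div_zero] at hbeta
    exact hbetaneg.ne hbeta
  rw [hbeta, div_mul_cancel₀ _ hk] at hkey
  set X : Ω → ℝ × ℝ × ℝ × ℝ := fun ω => (Y1 ω, Y0 ω, D1 ω, D0 ω) with hX
  have hXm : Measurable X := by fun_prop
  have hmap1 := map_cond_eq_of_indepFun hZm hXm hindep 1 hZpos
  have hmap0 := map_cond_eq_of_indepFun hZm hXm hindep 0 hZ0pos
  have hZ1s : MeasurableSet {ω | Z ω = 1} := hZm (measurableSet_singleton 1)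
  have hZ0s : MeasurableSet {ω | Z ω = 0} := hZm (measurableSet_singleton 0)
  have transfer : ∀ (ν : Measure Ω), ν.map X = μ.map X → ∀ f : ℝ × ℝ × ℝ × ℝ → ℝ,
      Measurable f → ∫ ω, f (X ω) ∂ν = ∫ ω, f (X ω) ∂μ := by
    intro ν hν f hf
    rw [← integral_map hXm.aemeasurable hf.aestronglyMeasurable, hν,
      integral_map hXm.aemeasurable hf.aestronglyMeasurable]
  have hEY1 : ∫ ω, Y ω ∂(μ[|{ω | Z ω = 1}]) = ∫ ω, (Y1 ω * D1 ω + Y0 ω * (1 - D1 ω)) ∂μ := by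
    rw [← transfer _ hmap1 (fun x => x.1 * x.2.2.1 + x.2.1 * (1 - x.2.2.1)) (by fun_prop)]
    refine integral_congr_ae ?_
    filter_upwards [ae_cond_mem hZ1s] with ω hω
    have hω : Z ω = 1 := hω
    simp [hYdef, hDdef, hX, hω]
  have hEY0 : ∫ ω, Y ω ∂(μ[|{ω | Z ω = 0}]) = ∫ ω, (Y1 ω * D0 ω + Y0 ω * (1 - D0 ω)) ∂μ := by
    rw [← transfer _ hmap0 (fun x => x.1 * x.2.2.2 + x.2.1 * (1 - x.2.2.2)) (by fun_prop)]
    refine integral_congr_ae ?_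
    filter_upwards [ae_cond_mem hZ0s] with ω hω
    have hω : Z ω = 0 := hω
    simp [hYdef, hDdef, hX, hω]
  have hAs : MeasurableSet {ω | Y1 ω = 1 ∧ D0 ω = 1} :=
    (hY1m (measurableSet_singleton 1)).inter (hD0m (measurableSet_singleton 1))
  have hP : (μ[|{ω | Z ω = 0}]) {ω | Y ω = 1 ∧ D ω = 1} = μ {ω | Y1 ω = 1 ∧ D0 ω = 1} := by
    have hS : MeasurableSet {x : ℝ × ℝ × ℝ × ℝ | x.1 = 1 ∧ x.2.2.2 = 1} :=
      (measurable_fst (measurableSet_singleton 1)).inter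
        ((by fun_prop : Measurable fun x : ℝ × ℝ × ℝ × ℝ => x.2.2.2) (measurableSet_singleton 1))
    have h := congrArg (fun ν => ν {x : ℝ × ℝ × ℝ × ℝ | x.1 = 1 ∧ x.2.2.2 = 1}) hmap0
    simp only [Measure.map_apply hXm hS] at h
    refine Eq.trans (measure_congr ?_) h
    filter_upwards [ae_cond_mem hZ0s] with ω hω
    have hω : Z ω = 0 := hω
    refine propext ?_
    change (Y ω = 1 ∧ D ω = 1) ↔ (Y1 ω = 1 ∧ D0 ω = 1)
    have hD : D ω = D0 ω := by simp [hDdef, hω]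
    have hY : Y ω = Y1 ω * D ω + Y0 ω * (1 - D ω) := by rw [hYdef]
    rw [hY, hD]
    constructor
    · rintro ⟨h1, h2⟩
      rw [h2] at h1
      exact ⟨by linarith, h2⟩
    · rintro ⟨h1, h2⟩
      rw [h1, h2]
      norm_num
  have hCs : MeasurableSet {ω | D1 ω = 1 ∧ D0 ω = 0} :=
    (hD1m (measurableSet_singleton 1)).inter (hD0m (measurableSet_singleton 0))
  have integrable_of_le : ∀ f : Ω → ℝ, Measurable f → (∀ᵐ ω ∂μ, ‖f ω‖ ≤ 1) → Integrable f μ :=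
    fun f hf hb => Integrable.of_bound hf.aestronglyMeasurable 1 hb
  have hI1 : Integrable (fun ω => Y1 ω * D1 ω + Y0 ω * (1 - D1 ω)) μ := by
    refine integrable_of_le _ (by fun_prop) ?_
    filter_upwards [hbinary] with ω hω
    rcases hω with ⟨h1 | h1, h0 | h0⟩ <;> rcases hD101 ω with h | h <;> simp [h1, h0, h]
  have hI0 : Integrable (fun ω => Y1 ω * D0 ω + Y0 ω * (1 - D0 ω)) μ := by
    refine integrable_of_le _ (by fun_prop) ?_
    filter_upwards [hbinary] with ω hω
    rcases hω with ⟨h1 | h1, h0 | h0⟩ <;> rcases hD001 ω with h | h <;> simp [h1, h0, h]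
  have hIA : Integrable ({ω | Y1 ω = 1 ∧ D0 ω = 1}.indicator (fun _ => (1 : ℝ))) μ :=
    (integrable_const 1).indicator hAs
  have hId : Integrable (fun ω => Y1 ω - Y0 ω) μ := by
    refine integrable_of_le _ (by fun_prop) ?_
    filter_upwards [hbinary] with ω hω
    rcases hω with ⟨h1 | h1, h0 | h0⟩ <;> simp [h1, h0]
  have hmain : ∫ ω in {ω | D1 ω = 1 ∧ D0 ω = 0}, (Y1 ω - Y0 ω) ∂μ < 0 := by
    refine lt_of_le_of_lt ?_ hkey
    rw [hEY1, hEY0, hP, ← integral_sub' hI1 hI0, ← integral_indicator hCs]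
    have hA : (μ {ω | Y1 ω = 1 ∧ D0 ω = 1}).toReal
        = ∫ ω, {ω | Y1 ω = 1 ∧ D0 ω = 1}.indicator (fun _ => (1 : ℝ)) ω ∂μ := by
      rw [integral_indicator hAs]
      simp [Measure.real]
    rw [hA, ← integral_add' (hI1.sub hI0) hIA]
    refine integral_mono_ae (hId.indicator hCs) ((hI1.sub hI0).add hIA) ?_
    filter_upwards [hbinary] with ω hω
    rcases hω with ⟨h1 | h1, h0 | h0⟩ <;> rcases hD101 ω with h | h <;>
      rcases hD001 ω with h' | h' <;> simp [Set.indicator, h1, h0, h, h']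
  have hbpos : 0 < b := lt_of_le_of_lt hc0 hcb
  have hmu : mu1 = b⁻¹ * ∫ ω in {ω | D1 ω = 1 ∧ D0 ω = 0}, (Y1 ω - Y0 ω) ∂μ := by
    rw [hmu1, ProbabilityTheory.cond, integral_smul_measure, hb, ENNReal.toReal_inv, smul_eq_mul]
  rw [hmu]
  exact mul_neg_of_pos_of_neg (inv_pos.mpr hbpos) hmain
end

section
/- Under the potential-outcomes IV setup, suppose Y(1), Y(0) ∈ {0,1} almost surely, P(Z=0) > 0 and c > 0. Then c·μ2 ≤ P(Y=1, D=1 | Z=0); that is, the defier proportion times the defier LATE is bounded above by the conditional probability of a treated unit with outcome 1 given Z = 0. -/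
/-!
Both sides are compared with `P(Y1 = 1, D0 = 1)`. The event `{Z = 0, Y = 1, D = 1}` coincides with
`{Z = 0, Y1 = 1, D0 = 1}`, so by independence of `Z` from the potential variables the conditional
probability on the right equals `P(Y1 = 1, D0 = 1)`. On the left, `c * mu2` is the integral of
`Y1 - Y0` over the defiers `{D1 = 0, D0 = 1}`, where binary outcomes give
`Y1 - Y0 ≤ 1_{Y1 = 1, D0 = 1}` almost surely.
-/

open MeasureTheory ProbabilityTheory

set_option linter.unusedVariables false

theorem stmt14 {Ω : Type*} [MeasurableSpace Ω] (μ : Measure Ω) [IsProbabilityMeasure μ]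
    (Y1 Y0 Z D1 D0 : Ω → ℝ)
    (hY1m : Measurable Y1) (hY0m : Measurable Y0) (hZm : Measurable Z)
    (hD1m : Measurable D1) (hD0m : Measurable D0)
    (hZ01 : ∀ ω, Z ω = 0 ∨ Z ω = 1)
    (hD101 : ∀ ω, D1 ω = 0 ∨ D1 ω = 1)
    (hD001 : ∀ ω, D0 ω = 0 ∨ D0 ω = 1)
    (hZpos : 0 < μ {ω | Z ω = 1})
    (hZlt : μ {ω | Z ω = 1} < 1)
    (hindep : IndepFun Z (fun ω => (Y1 ω, Y0 ω, D1 ω, D0 ω)) μ)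
    (D Y : Ω → ℝ)
    (hDdef : D = fun ω => D1 ω * Z ω + D0 ω * (1 - Z ω))
    (hYdef : Y = fun ω => Y1 ω * D ω + Y0 ω * (1 - D ω))
    (a b c : ℝ)
    (ha : a = (μ {ω | D1 ω = 1 ∧ D0 ω = 1}).toReal)
    (hb : b = (μ {ω | D1 ω = 1 ∧ D0 ω = 0}).toReal)
    (hc : c = (μ {ω | D1 ω = 0 ∧ D0 ω = 1}).toReal)
    (mu1 mu2 : ℝ)
    (hmu1 : mu1 = ∫ ω, (Y1 ω - Y0 ω) ∂(μ[|{ω | D1 ω = 1 ∧ D0 ω = 0}]))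
    (hmu2 : mu2 = ∫ ω, (Y1 ω - Y0 ω) ∂(μ[|{ω | D1 ω = 0 ∧ D0 ω = 1}]))
    (hbinary : ∀ᵐ ω ∂μ, (Y1 ω = 0 ∨ Y1 ω = 1) ∧ (Y0 ω = 0 ∨ Y0 ω = 1))
    (hZ0pos : 0 < μ {ω | Z ω = 0})
    (hcpos : 0 < c) :
    c * mu2 ≤ ((μ[|{ω | Z ω = 0}]) {ω | Y ω = 1 ∧ D ω = 1}).toReal := by
  have hBm : MeasurableSet {ω | Y1 ω = 1 ∧ D0 ω = 1} :=
    (hY1m (measurableSet_singleton 1)).inter (hD0m (measurableSet_singleton 1))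
  have hAm : MeasurableSet {ω | D1 ω = 0 ∧ D0 ω = 1} :=
    (hD1m (measurableSet_singleton 0)).inter (hD0m (measurableSet_singleton 1))
  have hZ0m : MeasurableSet {ω | Z ω = 0} := hZm (measurableSet_singleton 0)
  -- On `Z = 0` one has `D = D0`, and `D = 1` gives `Y = Y1`.
  have hset : {ω | Z ω = 0} ∩ {ω | Y ω = 1 ∧ D ω = 1}
      = {ω | Z ω = 0} ∩ {ω | Y1 ω = 1 ∧ D0 ω = 1} := by
    ext ω
    simp only [Set.mem_inter_iff, Set.mem_setOf_eq, hYdef, hDdef]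
    refine and_congr_right fun hz => ?_
    rw [hz]
    constructor
    · rintro ⟨h1, h2⟩
      have h3 : D0 ω = 1 := by simpa using h2
      exact ⟨by simpa [h3] using h1, h3⟩
    · rintro ⟨h1, h2⟩
      simp [h1, h2]
  have hind : μ ({ω | Z ω = 0} ∩ {ω | Y1 ω = 1 ∧ D0 ω = 1})
      = μ {ω | Z ω = 0} * μ {ω | Y1 ω = 1 ∧ D0 ω = 1} := by
    have hT : MeasurableSet {p : ℝ × ℝ × ℝ × ℝ | p.1 = 1 ∧ p.2.2.2 = 1} :=
      (measurable_fst (measurableSet_singleton 1)).inter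
        (measurable_snd.snd.snd (measurableSet_singleton 1))
    exact hindep.measure_inter_preimage_eq_mul _ _ (measurableSet_singleton 0) hT
  have hrhs : (μ[|{ω | Z ω = 0}]) {ω | Y ω = 1 ∧ D ω = 1} = μ {ω | Y1 ω = 1 ∧ D0 ω = 1} := by
    rw [cond_apply hZ0m, hset, hind, ← mul_assoc,
      ENNReal.inv_mul_cancel hZ0pos.ne' (measure_ne_top _ _), one_mul]
  have hlhs : c * mu2 = ∫ ω in {ω | D1 ω = 0 ∧ D0 ω = 1}, (Y1 ω - Y0 ω) ∂μ := by
    rw [hmu2, ProbabilityTheory.cond, integral_smul_measure, ENNReal.toReal_inv, ← hc,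
      smul_eq_mul, mul_inv_cancel_left₀ hcpos.ne']
  have hint : Integrable (fun ω => Y1 ω - Y0 ω) μ := by
    refine Integrable.of_bound (hY1m.sub hY0m).aestronglyMeasurable 1 ?_
    filter_upwards [hbinary] with ω h
    rcases h with ⟨h1 | h1, h0 | h0⟩ <;> simp [h1, h0]
  rw [hrhs, hlhs]
  calc ∫ ω in {ω | D1 ω = 0 ∧ D0 ω = 1}, (Y1 ω - Y0 ω) ∂μ
      ≤ ∫ ω in {ω | D1 ω = 0 ∧ D0 ω = 1},
          {ω | Y1 ω = 1 ∧ D0 ω = 1}.indicator (fun _ => (1 : ℝ)) ω ∂μ := by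
        refine setIntegral_mono_on_ae hint.integrableOn
          ((integrable_const 1).indicator hBm).integrableOn hAm ?_
        filter_upwards [hbinary] with ω h hA
        rcases h with ⟨h1 | h1, h0 | h0⟩ <;> simp [Set.indicator, h1, h0, hA.2]
    _ ≤ ∫ ω, {ω | Y1 ω = 1 ∧ D0 ω = 1}.indicator (fun _ => (1 : ℝ)) ω ∂μ :=
        setIntegral_le_integral ((integrable_const 1).indicator hBm)
          (Filter.Eventually.of_forall fun ω => Set.indicator_nonneg (fun _ _ => zero_le_one) ω)
    _ = (μ {ω | Y1 ω = 1 ∧ D0 ω = 1}).toReal := by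
        rw [integral_indicator_const _ hBm]
        simp [Measure.real]
end

section
/- Let k1, k2, η ∈ ℝ satisfy 0 < k2 < k1 < 1, 0 < η < k2 and η ≤ 1 − k1, and let r11, r10, t00, t10 ∈ [0,1] with β := r10 − t10 < 0. Assume η ≤ r11·k2, η ≤ (1 − t00)·(1 − k1) and β·(k1 − k2) + η ≥ 0. Then there exist r̃11, r̃10, r̃01, t̃00, t̃10, t̃01 ∈ [0,1] such that: (i) r̃11·(k2 − η) + r̃10·(k1 − k2 + η) = r11·k2 + r10·(k1 − k2); (ii) r̃11·(k2 − η) + r̃01·η = r11·k2; (iii) t̃01·η + t̃00·(1 − k1 − η) = t00·(1 − k1); (iv) t̃10·(k1 − k2 + η) + t̃00·(1 − k1 − η) = t10·(k1 − k2) + t00·(1 − k1); and (v) r̃10 − t̃10 ≥ 0. -/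
/-!
Let every defier have `Y(1) = 1` and `Y(0) = 0`, i.e. `r01' = 1` and `t01' = 0`. The four
observational equations then determine the other means: `eta` units with `Y(1) = 1` move from the
always takers to the compliers, and `eta` units with `Y(0) = 0` move from the never takers to the
compliers. The bounds on `eta` say that enough such units exist, and the new complier LATE is
`((r10 - t10) * (k1 - k2) + eta) / (k1 - k2 + eta)`, which is nonnegative.
-/

open MeasureTheory ProbabilityTheory

set_option linter.unusedVariables false

theorem stmt15 (k1 k2 eta r11 r10 t00 t10 : ℝ)
    (hk2 : 0 < k2) (hk21 : k2 < k1) (hk1 : k1 < 1)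
    (heta0 : 0 < eta) (hetak2 : eta < k2) (heta1 : eta ≤ 1 - k1)
    (hr11 : r11 ∈ Set.Icc (0:ℝ) 1) (hr10 : r10 ∈ Set.Icc (0:ℝ) 1)
    (ht00 : t00 ∈ Set.Icc (0:ℝ) 1) (ht10 : t10 ∈ Set.Icc (0:ℝ) 1)
    (hbeta : r10 - t10 < 0)
    (h1 : eta ≤ r11 * k2) (h2 : eta ≤ (1 - t00) * (1 - k1))
    (h3 : 0 ≤ (r10 - t10) * (k1 - k2) + eta) :
    ∃ r11' r10' r01' t00' t10' t01' : ℝ,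
      r11' ∈ Set.Icc (0:ℝ) 1 ∧ r10' ∈ Set.Icc (0:ℝ) 1 ∧ r01' ∈ Set.Icc (0:ℝ) 1 ∧
      t00' ∈ Set.Icc (0:ℝ) 1 ∧ t10' ∈ Set.Icc (0:ℝ) 1 ∧ t01' ∈ Set.Icc (0:ℝ) 1 ∧
      r11' * (k2 - eta) + r10' * (k1 - k2 + eta) = r11 * k2 + r10 * (k1 - k2) ∧
      r11' * (k2 - eta) + r01' * eta = r11 * k2 ∧
      t01' * eta + t00' * (1 - k1 - eta) = t00 * (1 - k1) ∧
      t10' * (k1 - k2 + eta) + t00' * (1 - k1 - eta) = t10 * (k1 - k2) + t00 * (1 - k1) ∧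
      0 ≤ r10' - t10' := by
  obtain ⟨hr11a, hr11b⟩ := hr11
  obtain ⟨hr10a, hr10b⟩ := hr10
  obtain ⟨ht00a, ht00b⟩ := ht00
  obtain ⟨ht10a, ht10b⟩ := ht10
  have hA : 0 < k2 - eta := by linarith
  have hC : 0 < k1 - k2 + eta := by linarith
  have hd : 0 < k1 - k2 := by linarith
  have hN : 0 ≤ 1 - k1 - eta := by linarith
  have hr10d : 0 ≤ r10 * (k1 - k2) := by positivity
  have ht10d : 0 ≤ t10 * (k1 - k2) := by positivity
  have ht00d : 0 ≤ t00 * (1 - k1) := mul_nonneg ht00a (by linarith)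
  -- If there are no never takers left (`1 - k1 = eta`), the second bound forces `t00 = 0`,
  -- so the junk value `x / 0 = 0` is harmless.
  have hT : t00 * (1 - k1) / (1 - k1 - eta) * (1 - k1 - eta) = t00 * (1 - k1) := by
    rcases hN.eq_or_lt with h | h
    · rw [← h, mul_zero]
      linarith
    · exact div_mul_cancel₀ _ h.ne'
  have hR11 : (r11 * k2 - eta) / (k2 - eta) * (k2 - eta) = r11 * k2 - eta :=
    div_mul_cancel₀ _ hA.ne'
  have hR10 : (r10 * (k1 - k2) + eta) / (k1 - k2 + eta) * (k1 - k2 + eta)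
      = r10 * (k1 - k2) + eta := div_mul_cancel₀ _ hC.ne'
  have hT10 : t10 * (k1 - k2) / (k1 - k2 + eta) * (k1 - k2 + eta) = t10 * (k1 - k2) :=
    div_mul_cancel₀ _ hC.ne'
  refine ⟨(r11 * k2 - eta) / (k2 - eta), (r10 * (k1 - k2) + eta) / (k1 - k2 + eta), 1,
    t00 * (1 - k1) / (1 - k1 - eta), t10 * (k1 - k2) / (k1 - k2 + eta), 0,
    ⟨div_nonneg (by linarith) hA.le, div_le_one_of_le₀ (by nlinarith) hA.le⟩,
    ⟨div_nonneg (by linarith) hC.le, div_le_one_of_le₀ (by nlinarith) hC.le⟩,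
    ⟨zero_le_one, le_rfl⟩,
    ⟨div_nonneg ht00d hN, div_le_one_of_le₀ (by linarith) hN⟩,
    ⟨div_nonneg ht10d hC.le, div_le_one_of_le₀ (by nlinarith) hC.le⟩,
    ⟨le_rfl, zero_le_one⟩, by linarith, by linarith, by linarith, by linarith, ?_⟩
  rw [← sub_div]
  exact div_nonneg (by linarith) hC.le
end

section
/- Let k1, k2 ∈ ℝ satisfy 0 < k2 < k1 < 1, and let r11, r10, t00, t10 ∈ [0,1] with β := r10 − t10 < 0. Set c̃ = r11·k2 and assume 0 < c̃ < k2, c̃ ≤ 1 − k1, c̃ ≤ (1 − t00)·(1 − k1) and β·(k1 − k2) + c̃ ≥ 0. Then there exist r̃11, r̃10, r̃01, t̃00, t̃10, t̃01 ∈ [0,1] such that: (i) r̃11·(k2 − c̃) + r̃10·(k1 − k2 + c̃) = r11·k2 + r10·(k1 − k2); (ii) r̃11·(k2 − c̃) + r̃01·c̃ = r11·k2; (iii) t̃01·c̃ + t̃00·(1 − k1 − c̃) = t00·(1 − k1); (iv) t̃10·(k1 − k2 + c̃) + t̃00·(1 − k1 − c̃) = t10·(k1 − k2) + t00·(1 −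 k1); and (v) r̃10 − t̃10 ≥ 0. -/
/-!
In the alternative model every defier has `Y(1) = 1` and `Y(0) = 0`, and every remaining always
taker has `Y(1) = 0`. Since `ctil = r11 * k2`, the defiers then carry exactly the mass
`P(Y = 1, D = 1 | Z = 0)`, and the other conditional means are forced by the matching equations:
the complier means are `(ctil + r10 * (k1 - k2)) / (k1 - k2 + ctil)` and
`t10 * (k1 - k2) / (k1 - k2 + ctil)`. Their difference has numerator
`(r10 - t10) * (k1 - k2) + ctil ≥ 0`, while `ctil ≤ (1 - t00) * (1 - k1)` says precisely that the
never-taker mean is at most `1`.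
-/

open MeasureTheory ProbabilityTheory

set_option linter.unusedVariables false

theorem stmt16 (k1 k2 r11 r10 t00 t10 : ℝ)
    (hk2 : 0 < k2) (hk21 : k2 < k1) (hk1 : k1 < 1)
    (hr11 : r11 ∈ Set.Icc (0:ℝ) 1) (hr10 : r10 ∈ Set.Icc (0:ℝ) 1)
    (ht00 : t00 ∈ Set.Icc (0:ℝ) 1) (ht10 : t10 ∈ Set.Icc (0:ℝ) 1)
    (hbeta : r10 - t10 < 0)
    (ctil : ℝ) (hctil : ctil = r11 * k2)
    (hc0 : 0 < ctil) (hck2 : ctil < k2) (hc1 : ctil ≤ 1 - k1)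
    (hct00 : ctil ≤ (1 - t00) * (1 - k1))
    (hkey : 0 ≤ (r10 - t10) * (k1 - k2) + ctil) :
    ∃ r11' r10' r01' t00' t10' t01' : ℝ,
      r11' ∈ Set.Icc (0:ℝ) 1 ∧ r10' ∈ Set.Icc (0:ℝ) 1 ∧ r01' ∈ Set.Icc (0:ℝ) 1 ∧
      t00' ∈ Set.Icc (0:ℝ) 1 ∧ t10' ∈ Set.Icc (0:ℝ) 1 ∧ t01' ∈ Set.Icc (0:ℝ) 1 ∧
      r11' * (k2 - ctil) + r10' * (k1 - k2 + ctil) = r11 * k2 + r10 * (k1 - k2) ∧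
      r11' * (k2 - ctil) + r01' * ctil = r11 * k2 ∧
      t01' * ctil + t00' * (1 - k1 - ctil) = t00 * (1 - k1) ∧
      t10' * (k1 - k2 + ctil) + t00' * (1 - k1 - ctil) = t10 * (k1 - k2) + t00 * (1 - k1) ∧
      0 ≤ r10' - t10' := by
  obtain ⟨hr0, hr1⟩ := hr10
  obtain ⟨ht0, ht1⟩ := ht10
  obtain ⟨hs0, hs1⟩ := ht00
  have hd : 0 < k1 - k2 := by linarith
  have hD : 0 < k1 - k2 + ctil := by linarith
  have hM : 0 ≤ t00 * (1 - k1) := mul_nonneg hs0 (by linarith)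
  have hM1 : t00 * (1 - k1) ≤ 1 - k1 - ctil := by linarith
  have hN : 0 ≤ 1 - k1 - ctil := by linarith
  -- If `ctil = 1 - k1` the quotient is the junk value `0`, which is harmless: then `t00 * (1 - k1) = 0`.
  have hcancel : t00 * (1 - k1) / (1 - k1 - ctil) * (1 - k1 - ctil) = t00 * (1 - k1) :=
    div_mul_cancel_of_imp fun h => by linarith
  have hrd : 0 ≤ r10 * (k1 - k2) := mul_nonneg hr0 hd.le
  have hrd1 : r10 * (k1 - k2) ≤ k1 - k2 := mul_le_of_le_one_left hd.le hr1
  have htd : 0 ≤ t10 * (k1 - k2) := mul_nonneg ht0 hd.le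
  have htd1 : t10 * (k1 - k2) ≤ k1 - k2 := mul_le_of_le_one_left hd.le ht1
  refine ⟨0, (ctil + r10 * (k1 - k2)) / (k1 - k2 + ctil), 1,
    t00 * (1 - k1) / (1 - k1 - ctil), t10 * (k1 - k2) / (k1 - k2 + ctil), 0,
    by simp, ⟨by positivity, (div_le_one hD).2 (by linarith)⟩, by simp,
    ⟨div_nonneg hM hN, div_le_one_of_le₀ hM1 hN⟩,
    ⟨by positivity, (div_le_one hD).2 (by linarith)⟩, by simp, ?_, ?_, ?_, ?_, ?_⟩
  · rw [div_mul_cancel₀ _ hD.ne']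
    linarith
  · linarith
  · linarith
  · rw [div_mul_cancel₀ _ hD.ne', hcancel]
  · rw [← sub_div]
    exact div_nonneg (by linarith) hD.le
end
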